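/- arXiv:math/0012139 — 2 statements merged into one kernel-verified Lean document; each statement's English description precedes it below -/
import Mathlib

section
/- Let p be an odd prime, n ≥ 1, K = ℚ_p(ζ_{p^n}), π = ζ_{p^n} - 1. For a principal unit ε of K, the trace Tr_{K/ℚ_p}(log ε) lies in p^n·ℤ_p, so that ζ_{p^n}^{Tr(-log ε)/p^n} is well defined (Artin–Hasse). -/
section
open Polynomial

/-- sum of the coefficients of index divisible by `p ^ k` -/
noncomputable def vA (p : ℕ) [Fact p.Prime] (k : ℕ) : ℤ_[p][X] →ₗ[ℤ_[p]] ℤ_[p] :=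
  Polynomial.lsum fun i => if p ^ k ∣ i then LinearMap.id else 0

lemma vA_monomial (p : ℕ) [Fact p.Prime] (k i : ℕ) (a : ℤ_[p]) :
    vA p k (monomial i a) = if p ^ k ∣ i then a else 0 := by
  simp only [vA, Polynomial.lsum_apply]
  rw [Polynomial.sum_monomial_index]
  · split_ifs <;> simp
  · simp

lemma vA_expand (p : ℕ) [Fact p.Prime] (k : ℕ) (h : ℤ_[p][X]) :
    vA p (k + 1) (expand ℤ_[p] p h) = vA p k h := by
  have hp : 0 < p := (Fact.out : p.Prime).pos
  induction h using Polynomial.induction_on' with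
  | add f g hf hg => simp [hf, hg]
  | monomial i a =>
    rw [expand_monomial, vA_monomial, vA_monomial, pow_succ]
    simp only [Nat.mul_dvd_mul_iff_right hp]

lemma vA_C_mul (p : ℕ) [Fact p.Prime] (k : ℕ) (c : ℤ_[p]) (h : ℤ_[p][X]) :
    vA p k (C c * h) = c * vA p k h := by
  rw [← smul_eq_C_mul, map_smul, smul_eq_mul]

lemma v_norm_nat (p : ℕ) [Fact p.Prime] (u : ℕ) (hu : ¬ p ∣ u) : ‖(u : ℤ_[p])‖ = 1 := by
  by_contra hne
  apply hu
  have := lt_of_le_of_ne (PadicInt.norm_le_one (u : ℤ_[p])) hne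
  have h3 := (PadicInt.norm_int_lt_one_iff_dvd (p := p) (u : ℤ)).1 (by exact_mod_cast this)
  exact_mod_cast h3

lemma v_pow_congr (p : ℕ) [Fact p.Prime] (g : ℤ_[p][X]) (m : ℕ) (hm : m ≠ 0) :
    ((p * m : ℕ) : ℤ_[p][X]) ∣ g ^ (p * m) - expand ℤ_[p] p (g ^ m) := by
  have hp : p.Prime := Fact.out
  have h0 : (p : ℤ_[p][X]) ∣ g ^ p - expand ℤ_[p] p g := by
    rw [← C_eq_natCast, C_dvd_iff_dvd_coeff]
    intro i
    rw [← Ideal.mem_span_singleton, ← PadicInt.maximalIdeal_eq_span_p, ← PadicInt.ker_toZMod,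
      RingHom.mem_ker, ← coeff_map, Polynomial.map_sub, Polynomial.map_pow, map_expand,
      ZMod.expand_card, sub_self, coeff_zero]
  obtain ⟨v, u, hu, rfl⟩ := Nat.exists_eq_pow_mul_and_not_dvd hm p hp.ne_one
  have h1 := dvd_sub_pow_of_dvd_sub h0 v
  have h2 := h1.trans (sub_dvd_pow_sub_pow _ _ u)
  have hunit : IsUnit (u : ℤ_[p]) := PadicInt.isUnit_iff.2 (v_norm_nat p u hu)
  have hunit' : IsUnit ((u : ℕ) : ℤ_[p][X]) := by
    rw [← C_eq_natCast]; exact hunit.map C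
  have e1 : ((p * (p ^ v * u) : ℕ) : ℤ_[p][X]) = (p : ℤ_[p][X]) ^ (v + 1) * u := by
    push_cast; ring
  rw [e1, hunit'.mul_right_dvd]
  convert h2 using 2
  · rw [← pow_mul, ← pow_mul]
  · rw [map_pow, ← pow_mul]

lemma vA_congr (p : ℕ) [Fact p.Prime] (g : ℤ_[p][X]) (k m : ℕ) (hm : m ≠ 0) :
    ((p * m : ℕ) : ℤ_[p]) ∣ vA p (k + 1) (g ^ (p * m)) - vA p k (g ^ m) := by
  obtain ⟨q, hq⟩ := v_pow_congr p g m hm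
  rw [← vA_expand p k (g ^ m), ← map_sub, hq, ← C_eq_natCast, vA_C_mul]
  exact dvd_mul_right _ _

/-- combined term is integral -/
lemma v_int (p : ℕ) [Fact p.Prime] (g : ℤ_[p][X]) (k m : ℕ) (hm : m ≠ 0) :
    ‖((vA p (k + 1) (g ^ m) : ℤ_[p]) : ℚ_[p]) / m -
      (if p ∣ m then ((vA p k (g ^ (m / p)) : ℤ_[p]) : ℚ_[p]) / m else 0)‖ ≤ 1 := by
  have hp : p.Prime := Fact.out
  split_ifs with h
  · obtain ⟨l, rfl⟩ := h
    have hl : l ≠ 0 := by rintro rfl; simp at hm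
    rw [Nat.mul_div_cancel_left _ hp.pos]
    obtain ⟨c, hc⟩ := vA_congr p g k l hl
    have hm' : ((p * l : ℕ) : ℚ_[p]) ≠ 0 := by exact_mod_cast hm
    rw [← sub_div, ← PadicInt.coe_sub, hc, PadicInt.coe_mul, PadicInt.coe_natCast,
      mul_div_cancel_left₀ _ hm']
    exact c.2
  · rw [sub_zero, norm_div]
    have : ‖(m : ℚ_[p])‖ = 1 := by simpa [PadicInt.norm_def] using v_norm_nat p m h
    rw [this, div_one]
    exact (vA p (k + 1) (g ^ m)).2

lemma v_sum_reindex {M : Type*} [AddCommMonoid M] (p : ℕ) (hp : 0 < p) (G : ℕ → M) (N : ℕ) :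
    ∑ m ∈ Finset.range (p * N), (if p ∣ m + 1 then G ((m + 1) / p) else 0) =
      ∑ m ∈ Finset.range N, G (m + 1) := by
  induction N with
  | zero => simp
  | succ N ih =>
    rw [Nat.mul_succ, Finset.sum_range_add, ih, Finset.sum_range_succ]
    congr 1
    rw [Finset.sum_eq_single (p - 1)]
    · have : p * N + (p - 1) + 1 = p * (N + 1) := by rw [Nat.mul_succ]; omega
      rw [this, if_pos (dvd_mul_right _ _), Nat.mul_div_cancel_left _ hp]
    · intro b hb hb'
      rw [if_neg]
      intro hd
      rw [add_assoc, Nat.dvd_add_right (dvd_mul_right _ _)] at hd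
      have := Nat.le_of_dvd (by omega) hd
      have := Finset.mem_range.1 hb
      omega
    · intro h; simp at h; omega

lemma v_sum_units {M : Type*} [AddCommGroup M] (p : ℕ) [Fact p.Prime] (k : ℕ) (F : ℕ → M)
    [NeZero (p ^ (k + 1))] :
    ∑ u : (ZMod (p ^ (k + 1)))ˣ, F (u : ZMod (p ^ (k + 1))).val =
      ∑ j ∈ Finset.range (p ^ (k + 1)), F j - ∑ j ∈ Finset.range (p ^ k), F (p * j) := by
  have hp : p.Prime := Fact.out
  rw [eq_sub_iff_add_eq, ← Finset.sum_filter_add_sum_filter_not (Finset.range (p ^ (k + 1)))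
    (fun j => Nat.Coprime j (p ^ (k + 1)))]
  congr 1
  · refine Finset.sum_bij (fun u _ => (u : ZMod (p ^ (k + 1))).val) ?_ ?_ ?_ ?_
    · intro u _
      simp only [Finset.mem_filter, Finset.mem_range]
      exact ⟨ZMod.val_lt _, ZMod.val_coe_unit_coprime u⟩
    · intro u _ v _ h
      exact Units.ext (ZMod.val_injective _ h)
    · intro j hj
      simp only [Finset.mem_filter, Finset.mem_range] at hj
      refine ⟨ZMod.unitOfCoprime j hj.2, Finset.mem_univ _, ?_⟩
      simp [ZMod.val_cast_of_lt hj.1]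
    · intros; rfl
  · refine Finset.sum_bij (fun j _ => p * j) ?_ ?_ ?_ ?_
    · intro j hj
      simp only [Finset.mem_filter, Finset.mem_range] at hj ⊢
      refine ⟨by rw [pow_succ']; exact Nat.mul_lt_mul_of_pos_left hj hp.pos, ?_⟩
      intro h
      rw [Nat.coprime_pow_right_iff (Nat.succ_pos k)] at h
      have := (Nat.Coprime.coprime_mul_right h)
      simp at this
      exact hp.ne_one this
    · intro a _ b _ h
      exact Nat.eq_of_mul_eq_mul_left hp.pos h
    · intro j hj
      simp only [Finset.mem_filter, Finset.mem_range] at hj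
      rw [Nat.coprime_pow_right_iff (Nat.succ_pos k), Nat.coprime_comm, hp.coprime_iff_not_dvd,
        not_not] at hj
      obtain ⟨h1, l, rfl⟩ := hj
      refine ⟨l, ?_, rfl⟩
      rw [pow_succ'] at h1
      exact Finset.mem_range.2 (Nat.lt_of_mul_lt_mul_left h1)
    · intros; rfl

lemma v_root_sum {K : Type*} [Field K] (p : ℕ) [Fact p.Prime] (φ : ℤ_[p] →+* K) (k : ℕ) (η : K)
    (hη : IsPrimitiveRoot η (p ^ k)) (h : ℤ_[p][X]) :
    ∑ j ∈ Finset.range (p ^ k), eval₂ φ (η ^ j) h = φ ((p : ℤ_[p]) ^ k * vA p k h) := by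
  induction h using Polynomial.induction_on' with
  | add f g hf hg => simp only [eval₂_add, Finset.sum_add_distrib, hf, hg, map_add, mul_add]
  | monomial i a =>
    simp only [eval₂_monomial, vA_monomial]
    rw [← Finset.mul_sum]
    have e : ∀ j, (η ^ j) ^ i = (η ^ i) ^ j := fun j => by rw [← pow_mul, ← pow_mul, mul_comm]
    simp only [e]
    split_ifs with hd
    · rw [(hη.pow_eq_one_iff_dvd i).2 hd]
      simp [mul_comm]
    · have h1 : η ^ i ≠ 1 := fun h => hd ((hη.pow_eq_one_iff_dvd i).1 h)
      have : (η ^ i) ^ (p ^ k) = 1 := by rw [← pow_mul, mul_comm, pow_mul, hη.pow_eq_one, one_pow]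
      rw [geom_sum_eq h1, this]
      simp

section
variable {p : ℕ} [Fact p.Prime] {K : Type*} [NormedField K] [Algebra ℚ_[p] K]

lemma v_ultra (hnorm : ∀ x : ℚ_[p], ‖algebraMap ℚ_[p] K x‖ = ‖x‖) : IsUltrametricDist K := by
  apply IsUltrametricDist.isUltrametricDist_of_forall_norm_natCast_le_one
  intro m
  rw [← map_natCast (algebraMap ℚ_[p] K) m, hnorm]
  simpa [PadicInt.norm_def] using PadicInt.norm_le_one (m : ℤ_[p])

lemma v_norm_root {ζ : K} {N : ℕ} (hN : N ≠ 0) (h : ζ ^ N = 1) : ‖ζ‖ = 1 := by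
  have : ‖ζ‖ ^ N = 1 := by rw [← norm_pow, h, norm_one]
  exact (pow_eq_one_iff_of_nonneg (norm_nonneg _) hN).1 this

lemma v_pow_sub_le [IsUltrametricDist K] {ζ : K} (h : ‖ζ‖ = 1) (j : ℕ) :
    ‖ζ ^ j - 1‖ ≤ ‖ζ - 1‖ := by
  rw [← geom_sum_mul, norm_mul]
  refine mul_le_of_le_one_left (norm_nonneg _) ?_
  refine IsUltrametricDist.norm_sum_le_of_forall_le_of_nonneg zero_le_one fun i _ => ?_
  rw [norm_pow, h, one_pow]

lemma v_pi_norm [IsUltrametricDist K] (hnorm : ∀ x : ℚ_[p], ‖algebraMap ℚ_[p] K x‖ = ‖x‖)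
    {ζ : K} {k : ℕ} (hζ : IsPrimitiveRoot ζ (p ^ (k + 1))) :
    ‖ζ - 1‖ ^ (Nat.totient (p ^ (k + 1))) = (p : ℝ)⁻¹ := by
  have hp : p.Prime := Fact.out
  have hN : p ^ (k + 1) ≠ 0 := pow_ne_zero _ hp.ne_zero
  have h1 := Polynomial.eval_one_cyclotomic_prime_pow (R := K) (p := p) k
  rw [cyclotomic_eq_prod_X_sub_primitiveRoots hζ, eval_prod] at h1
  have h2 := congrArg norm h1
  rw [norm_prod, ← map_natCast (algebraMap ℚ_[p] K) p, hnorm, Padic.norm_p] at h2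
  rw [← h2, ← hζ.card_primitiveRoots]
  symm
  apply Finset.prod_eq_pow_card
  intro μ hμ
  have hμ' := isPrimitiveRoot_of_mem_primitiveRoots hμ
  simp only [eval_sub, eval_X, eval_C]
  rw [norm_sub_rev]
  have : NeZero (p ^ (k + 1)) := ⟨hN⟩
  apply le_antisymm
  · obtain ⟨i, -, rfl⟩ := hζ.eq_pow_of_pow_eq_one hμ'.pow_eq_one
    exact v_pow_sub_le (v_norm_root hN hζ.pow_eq_one) i
  · obtain ⟨i, -, rfl⟩ := hμ'.eq_pow_of_pow_eq_one hζ.pow_eq_one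
    exact v_pow_sub_le (v_norm_root hN hμ'.pow_eq_one) i

lemma v_pi_lt {π : K} {e : ℕ} (hπ : ‖π‖ ^ e = (p : ℝ)⁻¹) : ‖π‖ < 1 := by
  have hp : p.Prime := Fact.out
  by_contra h
  have h1 := one_le_pow₀ (n := e) (not_lt.1 h)
  rw [hπ] at h1
  have : (p : ℝ)⁻¹ < 1 := inv_lt_one_of_one_lt₀ (by exact_mod_cast hp.one_lt)
  linarith

/-- Uniqueness of the norms of the terms of a `π`-adic expansion. -/
lemma v_distinct (hnorm : ∀ x : ℚ_[p], ‖algebraMap ℚ_[p] K x‖ = ‖x‖)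
    {π : K} {e : ℕ} (hπ : ‖π‖ ^ e = (p : ℝ)⁻¹) (a b : ℚ_[p]) (i j : ℕ) (hi : i < e) (hj : j < e)
    (ha : a ≠ 0)
    (h : ‖algebraMap ℚ_[p] K a * π ^ i‖ = ‖algebraMap ℚ_[p] K b * π ^ j‖) : i = j := by
  have hp : p.Prime := Fact.out
  have hp0 : (p : ℝ) ≠ 0 := by exact_mod_cast hp.ne_zero
  have hπ0 : ‖π‖ ≠ 0 := by
    intro h0
    rw [h0, zero_pow (by omega)] at hπ
    exact inv_ne_zero hp0 hπ.symm
  have hb : b ≠ 0 := by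
    rintro rfl
    rw [norm_mul, norm_pow, hnorm, map_zero, zero_mul, norm_zero] at h
    exact mul_ne_zero (norm_ne_zero_iff.2 ha) (pow_ne_zero _ hπ0) h
  have h1 := congrArg (· ^ e) h
  simp only [norm_mul, norm_pow, hnorm, mul_pow] at h1
  rw [← pow_mul, ← pow_mul, mul_comm i, mul_comm j, pow_mul, pow_mul, hπ,
    Padic.norm_eq_zpow_neg_valuation ha, Padic.norm_eq_zpow_neg_valuation hb, inv_pow, inv_pow,
    ← zpow_natCast, ← zpow_natCast, ← zpow_natCast, ← zpow_natCast, ← zpow_mul, ← zpow_mul,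
    ← zpow_neg, ← zpow_neg, ← zpow_add₀ hp0, ← zpow_add₀ hp0] at h1
  have h2 := zpow_right_injective₀ (by exact_mod_cast hp.pos) (by exact_mod_cast hp.ne_one) h1
  have h3 : (i : ℤ) - j = e * (b.valuation - a.valuation) := by linarith
  have h4 : (i : ℤ) - j = 0 := by
    refine Int.eq_zero_of_abs_lt_dvd (m := e) ⟨_, h3⟩ ?_
    rw [abs_lt]; constructor <;> omega
  omega

lemma v_norm_terms [IsUltrametricDist K] (hnorm : ∀ x : ℚ_[p], ‖algebraMap ℚ_[p] K x‖ = ‖x‖)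
    {π : K} {e : ℕ} (hπ : ‖π‖ ^ e = (p : ℝ)⁻¹) (a : ℕ → ℚ_[p]) (i : ℕ) (hi : i < e) :
    ‖algebraMap ℚ_[p] K (a i) * π ^ i‖ ≤
      ‖∑ j ∈ Finset.range e, algebraMap ℚ_[p] K (a j) * π ^ j‖ := by
  classical
  set t : ℕ → K := fun j => algebraMap ℚ_[p] K (a j) * π ^ j with ht
  set s := (Finset.range e).filter fun j => a j ≠ 0 with hs
  have hsum : ∑ j ∈ Finset.range e, t j = ∑ j ∈ s, t j := by
    rw [hs, Finset.sum_filter]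
    refine Finset.sum_congr rfl fun j _ => ?_
    split_ifs with h
    · rfl
    · simp only [ne_eq, not_not] at h
      simp [ht, h]
  change ‖t i‖ ≤ ‖∑ j ∈ Finset.range e, t j‖
  by_cases hai : a i = 0
  · simp [ht, hai]
  have his : i ∈ s := by simp [hs, hi, hai]
  rw [hsum, IsUltrametricDist.norm_sum_eq_sup'_of_pairwise_ne ⟨i, his⟩]
  · exact Finset.le_sup' (fun j => ‖t j‖) his
  · intro x hx y hy hxy h
    have hx' := Finset.mem_filter.1 (Finset.mem_coe.1 hx)
    have hy' := Finset.mem_filter.1 (Finset.mem_coe.1 hy)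
    exact hxy (v_distinct hnorm hπ (a x) (a y) x y (Finset.mem_range.1 hx'.1)
      (Finset.mem_range.1 hy'.1) hx'.2 h)

lemma v_irred [FiniteDimensional ℚ_[p] K] (hnorm : ∀ x : ℚ_[p], ‖algebraMap ℚ_[p] K x‖ = ‖x‖)
    {ζ : K} {k : ℕ} (hζ : IsPrimitiveRoot ζ (p ^ (k + 1))) :
    minpoly ℚ_[p] ζ = cyclotomic (p ^ (k + 1)) ℚ_[p] := by
  have hp : p.Prime := Fact.out
  have := v_ultra hnorm
  have hN : 0 < p ^ (k + 1) := pow_pos hp.pos _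
  have hπ := v_pi_norm hnorm hζ
  have hintg : IsIntegral ℚ_[p] ζ := Algebra.IsIntegral.isIntegral ζ
  have hdvd : minpoly ℚ_[p] ζ ∣ cyclotomic (p ^ (k + 1)) ℚ_[p] := by
    apply minpoly.dvd
    rw [aeval_def, eval₂_eq_eval_map, map_cyclotomic]
    exact hζ.isRoot_cyclotomic hN
  have hc := cyclotomic.monic (p ^ (k + 1)) ℚ_[p]
  suffices hle : (cyclotomic (p ^ (k + 1)) ℚ_[p]).natDegree ≤ (minpoly ℚ_[p] ζ).natDegree from
    (Polynomial.eq_of_monic_of_dvd_of_natDegree_le (minpoly.monic hintg) hc hdvd hle).symm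
  rw [natDegree_cyclotomic]
  by_contra hlt
  push Not at hlt
  set q := (minpoly ℚ_[p] ζ).comp (X + C 1) with hq
  have hqm : q.Monic := (minpoly.monic hintg).comp_X_add_C 1
  have hqd : q.natDegree = (minpoly ℚ_[p] ζ).natDegree := by
    rw [hq, natDegree_comp, natDegree_X_add_C, mul_one]
  have hq0 : aeval (ζ - 1) q = 0 := by
    rw [hq, aeval_comp]; simp
  have h1 := v_norm_terms hnorm hπ (fun i => q.coeff i) q.natDegree (by omega)
  have h2 : ∑ j ∈ Finset.range (p ^ (k + 1)).totient,
      algebraMap ℚ_[p] K (q.coeff j) * (ζ - 1) ^ j = aeval (ζ - 1) q := by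
    rw [aeval_eq_sum_range' (by omega : q.natDegree < (p ^ (k + 1)).totient)]
    simp [Algebra.smul_def]
  rw [h2, hq0, norm_zero, hqm.coeff_natDegree, map_one, one_mul, norm_pow] at h1
  have h3 : ‖ζ - 1‖ = 0 := by
    have := le_antisymm h1 (by positivity)
    exact eq_zero_of_pow_eq_zero this
  rw [h3, zero_pow (Nat.totient_pos.2 hN).ne'] at hπ
  have : (p : ℝ) ≠ 0 := by exact_mod_cast hp.ne_zero
  exact inv_ne_zero this hπ.symm

/-- the structure map `ℤ_p → K` -/
noncomputable def vphi (p : ℕ) [Fact p.Prime] (K : Type*) [Field K] [Algebra ℚ_[p] K] :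
    ℤ_[p] →+* K := (algebraMap ℚ_[p] K).comp PadicInt.Coe.ringHom

lemma vphi_apply (p : ℕ) [Fact p.Prime] (K : Type*) [Field K] [Algebra ℚ_[p] K] (c : ℤ_[p]) :
    vphi p K c = algebraMap ℚ_[p] K (c : ℚ_[p]) := rfl

lemma v_rep [FiniteDimensional ℚ_[p] K] (hnorm : ∀ x : ℚ_[p], ‖algebraMap ℚ_[p] K x‖ = ‖x‖)
    {ζ : K} {k : ℕ} (hζ : IsPrimitiveRoot ζ (p ^ (k + 1)))
    (hgen : Algebra.adjoin ℚ_[p] {ζ} = ⊤) (x : K) (hx : ‖x‖ < 1) :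
    ∃ g : ℤ_[p][X], eval₂ (vphi p K) ζ g = x ∧ ∀ j : ℕ, ‖eval₂ (vphi p K) (ζ ^ j) g‖ < 1 := by
  have hp : p.Prime := Fact.out
  have := v_ultra hnorm
  have hN : 0 < p ^ (k + 1) := pow_pos hp.pos _
  have hπ := v_pi_norm hnorm hζ
  have hπ1 := v_pi_lt hπ
  have hζ1 : ‖ζ‖ = 1 := v_norm_root hN.ne' hζ.pow_eq_one
  have hintg : IsIntegral ℚ_[p] ζ := Algebra.IsIntegral.isIntegral ζ
  set e := (p ^ (k + 1)).totient with he
  have he0 : 0 < e := Nat.totient_pos.2 hN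
  obtain ⟨a, ha⟩ : ∃ a : ℕ → ℚ_[p],
      x = ∑ j ∈ Finset.range e, algebraMap ℚ_[p] K (a j) * (ζ - 1) ^ j := by
    have hx' : x ∈ Algebra.adjoin ℚ_[p] {ζ} := by rw [hgen]; trivial
    rw [Algebra.adjoin_singleton_eq_range_aeval] at hx'
    obtain ⟨f, rfl⟩ := hx'
    set r := f %ₘ (minpoly ℚ_[p] ζ) with hr
    have h1 : aeval ζ r = aeval ζ f :=
      aeval_modByMonic_eq_self_of_root (minpoly.aeval _ _)
    have h2 : r.natDegree < e := by
      rw [hr, v_irred hnorm hζ, he, ← natDegree_cyclotomic (p ^ (k + 1)) ℚ_[p]]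
      apply natDegree_modByMonic_lt _ (cyclotomic.monic _ _)
      intro h
      have := congrArg natDegree h
      rw [natDegree_cyclotomic, natDegree_one] at this
      omega
    refine ⟨fun i => (r.comp (X + C 1)).coeff i, ?_⟩
    have h3 : aeval (ζ - 1) (r.comp (X + C 1)) = aeval ζ f := by
      rw [aeval_comp, ← h1]; simp
    rw [AlgHom.toRingHom_eq_coe, RingHom.coe_coe, ← h3, aeval_eq_sum_range' (n := e)]
    · simp [Algebra.smul_def]
    · rw [natDegree_comp, natDegree_X_add_C, mul_one]; exact h2
  have hterm : ∀ i < e, ‖a i‖ * ‖ζ - 1‖ ^ i < 1 := by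
    intro i hi
    have := v_norm_terms hnorm hπ a i hi
    rw [← ha, norm_mul, hnorm, norm_pow] at this
    exact this.trans_lt hx
  have hp1 : (1 : ℝ) < p := by exact_mod_cast hp.one_lt
  have hπ0 : 0 < ‖ζ - 1‖ := by
    by_contra h
    have h0 : ‖ζ - 1‖ = 0 := le_antisymm (not_lt.1 h) (norm_nonneg _)
    rw [h0, zero_pow he0.ne'] at hπ
    exact inv_ne_zero (by positivity) hπ.symm
  have hai : ∀ i < e, ‖a i‖ ≤ 1 := by
    intro i hi
    by_contra hgt
    push Not at hgt
    have h1 := hterm i hi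
    have h2 : (p : ℝ) ≤ ‖a i‖ := by
      have hne : a i ≠ 0 := by rintro h; rw [h, norm_zero] at hgt; linarith
      rw [Padic.norm_eq_zpow_neg_valuation hne] at hgt ⊢
      rw [one_lt_zpow_iff_right₀ hp1] at hgt
      calc (p : ℝ) = (p : ℝ) ^ (1 : ℤ) := (zpow_one _).symm
        _ ≤ _ := zpow_le_zpow_right₀ hp1.le (by omega)
    have h3 : (p : ℝ)⁻¹ ≤ ‖ζ - 1‖ ^ i := by
      rw [← hπ]; exact pow_le_pow_of_le_one (norm_nonneg _) hπ1.le hi.le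
    have : (p : ℝ) * (p : ℝ)⁻¹ ≤ ‖a i‖ * ‖ζ - 1‖ ^ i := by gcongr
    rw [mul_inv_cancel₀ (by positivity)] at this
    linarith
  let b : ℕ → ℤ_[p] := fun i => if h : ‖a i‖ ≤ 1 then ⟨a i, h⟩ else 0
  have hb : ∀ i < e, vphi p K (b i) = algebraMap ℚ_[p] K (a i) := by
    intro i hi
    have : b i = ⟨a i, hai i hi⟩ := dif_pos (hai i hi)
    rw [vphi_apply, this]
  have hev : ∀ y : K, eval₂ (vphi p K) y (∑ i ∈ Finset.range e, C (b i) * (X - 1) ^ i) =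
      ∑ i ∈ Finset.range e, algebraMap ℚ_[p] K (a i) * (y - 1) ^ i := by
    intro y
    rw [eval₂_finsetSum]
    refine Finset.sum_congr rfl fun i hi => ?_
    rw [eval₂_mul, eval₂_C, eval₂_pow, eval₂_sub, eval₂_X, eval₂_one, hb i (Finset.mem_range.1 hi)]
  refine ⟨∑ i ∈ Finset.range e, C (b i) * (X - 1) ^ i, by rw [hev, ← ha], fun j => ?_⟩
  rw [hev]
  obtain ⟨i, hi, hle⟩ := IsUltrametricDist.exists_norm_finsetSum_le_of_nonempty
    (Finset.nonempty_range_iff.2 he0.ne')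
    (fun i => algebraMap ℚ_[p] K (a i) * (ζ ^ j - 1) ^ i)
  refine hle.trans_lt ?_
  rw [norm_mul, hnorm, norm_pow]
  refine lt_of_le_of_lt ?_ (hterm i (Finset.mem_range.1 hi))
  gcongr
  exact v_pow_sub_le hζ1 j

lemma v_trace [FiniteDimensional ℚ_[p] K] (hnorm : ∀ x : ℚ_[p], ‖algebraMap ℚ_[p] K x‖ = ‖x‖)
    {ζ : K} {k : ℕ} (hζ : IsPrimitiveRoot ζ (p ^ (k + 1)))
    (hgen : Algebra.adjoin ℚ_[p] {ζ} = ⊤) (h : ℤ_[p][X]) :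
    Algebra.trace ℚ_[p] K (eval₂ (vphi p K) ζ h) =
      (p : ℚ_[p]) ^ (k + 1) * (vA p (k + 1) h : ℤ_[p]) - (p : ℚ_[p]) ^ k * (vA p k h : ℤ_[p]) := by
  have hp : p.Prime := Fact.out
  have : NeZero (p ^ (k + 1)) := ⟨pow_ne_zero _ hp.ne_zero⟩
  have hirr : Irreducible (cyclotomic (p ^ (k + 1)) ℚ_[p]) := by
    rw [← v_irred hnorm hζ]
    exact minpoly.irreducible (Algebra.IsIntegral.isIntegral ζ)
  have : IsCyclotomicExtension {p ^ (k + 1)} ℚ_[p] K := by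
    rw [IsCyclotomicExtension.iff_singleton]
    refine ⟨⟨ζ, hζ⟩, fun x => ?_⟩
    have hx' : x ∈ Algebra.adjoin ℚ_[p] {ζ} := by rw [hgen]; trivial
    exact Algebra.adjoin_mono (by simpa using hζ.pow_eq_one) hx'
  have : IsGalois ℚ_[p] K := IsCyclotomicExtension.isGalois {p ^ (k + 1)} ℚ_[p] K
  apply (algebraMap ℚ_[p] K).injective
  rw [trace_eq_sum_automorphisms]
  have hσ : ∀ σ : K ≃ₐ[ℚ_[p]] K, σ (eval₂ (vphi p K) ζ h) = eval₂ (vphi p K) (ζ ^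
      ((IsCyclotomicExtension.autEquivPow K hirr σ : (ZMod (p ^ (k + 1)))ˣ) :
        ZMod (p ^ (k + 1))).val) h := by
    intro σ
    have h1 : σ ζ = ζ ^ ((IsCyclotomicExtension.autEquivPow K hirr σ : (ZMod (p ^ (k + 1)))ˣ) :
        ZMod (p ^ (k + 1))).val := by
      have hz := IsCyclotomicExtension.zeta_spec (p ^ (k + 1)) ℚ_[p] K
      obtain ⟨i, -, hi⟩ := hz.eq_pow_of_pow_eq_one hζ.pow_eq_one
      have h2 := hz.autToPow_spec ℚ_[p] σ
      rw [IsCyclotomicExtension.autEquivPow_apply]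
      rw [← hi, map_pow, ← pow_mul, mul_comm, pow_mul]
      congr 1
      exact h2.symm
    rw [← h1]
    have := hom_eval₂ h (vphi p K) (σ : K →+* K) ζ
    have hc : (σ : K →+* K).comp (vphi p K) = vphi p K := by
      apply RingHom.ext
      intro c
      rw [RingHom.comp_apply, vphi_apply]
      exact σ.commutes _
    rw [hc] at this
    exact this
  simp only [hσ]
  have hsc := Equiv.sum_comp (IsCyclotomicExtension.autEquivPow K hirr).toEquiv
    (fun u : (ZMod (p ^ (k + 1)))ˣ => eval₂ (vphi p K) (ζ ^ (u : ZMod (p ^ (k + 1))).val) h)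
  refine hsc.trans ?_
  rw [v_sum_units p k (fun j => eval₂ (vphi p K) (ζ ^ j) h), v_root_sum p _ _ _ hζ]
  have hζp : IsPrimitiveRoot (ζ ^ p) (p ^ k) := hζ.pow (pow_pos hp.pos _) (pow_succ' p k)
  simp only [pow_mul ζ p]
  rw [v_root_sum p _ _ _ hζp, vphi_apply, vphi_apply, ← map_sub]
  push_cast
  rfl

lemma v_tail [FiniteDimensional ℚ_[p] K] (hnorm : ∀ x : ℚ_[p], ‖algebraMap ℚ_[p] K x‖ = ‖x‖)
    {ζ : K} {k : ℕ} (hζ : IsPrimitiveRoot ζ (p ^ (k + 1))) (g : ℤ_[p][X])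
    (hg : ∀ j : ℕ, ‖eval₂ (vphi p K) (ζ ^ j) g‖ < 1) :
    Filter.Tendsto (fun m : ℕ => (p : ℚ_[p]) ^ k * (vA p k (g ^ m) : ℤ_[p]) / m)
      Filter.atTop (nhds 0) := by
  have hp : p.Prime := Fact.out
  have := v_ultra hnorm
  have hζp : IsPrimitiveRoot (ζ ^ p) (p ^ k) := hζ.pow (pow_pos hp.pos _) (pow_succ' p k)
  have hne : (Finset.range (p ^ k)).Nonempty :=
    Finset.nonempty_range_iff.2 (pow_ne_zero _ hp.ne_zero)
  obtain ⟨j0, -, hj0⟩ := Finset.exists_max_image (Finset.range (p ^ k))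
    (fun j => ‖eval₂ (vphi p K) ((ζ ^ p) ^ j) g‖) hne
  set r := ‖eval₂ (vphi p K) ((ζ ^ p) ^ j0) g‖ with hr
  have hr1 : r < 1 := by rw [hr, ← pow_mul]; exact hg _
  have hr0 : 0 ≤ r := norm_nonneg _
  refine squeeze_zero_norm (a := fun m : ℕ => (m : ℝ) * r ^ m) (fun m => ?_)
    (tendsto_self_mul_const_pow_of_lt_one hr0 hr1)
  have h1 : ‖(p : ℚ_[p]) ^ k * (vA p k (g ^ m) : ℤ_[p])‖ ≤ r ^ m := by
    rw [← hnorm]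
    have : algebraMap ℚ_[p] K ((p : ℚ_[p]) ^ k * (vA p k (g ^ m) : ℤ_[p])) =
        vphi p K ((p : ℤ_[p]) ^ k * vA p k (g ^ m)) := by
      rw [vphi_apply]; push_cast; rfl
    rw [this, ← v_root_sum p _ _ _ hζp]
    refine IsUltrametricDist.norm_sum_le_of_forall_le_of_nonneg (by positivity) fun j hj => ?_
    rw [eval₂_pow, norm_pow]
    gcongr
    exact hj0 j hj
  rw [norm_div, div_eq_mul_inv, mul_comm]
  have h2 : ‖(m : ℚ_[p])‖⁻¹ ≤ m := by
    rcases Nat.eq_zero_or_pos m with rfl | hm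
    · simp
    have hm0 : (m : ℚ_[p]) ≠ 0 := by exact_mod_cast hm.ne'
    rw [Padic.norm_eq_zpow_neg_valuation hm0, zpow_neg, inv_inv, Padic.valuation_natCast,
      zpow_natCast]
    exact_mod_cast Nat.le_of_dvd hm pow_padicValNat_dvd
  gcongr

lemma v_sub_le_max (a b : ℚ_[p]) : ‖a - b‖ ≤ max ‖a‖ ‖b‖ := by
  rw [sub_eq_add_neg, ← norm_neg b]
  exact IsUltrametricDist.norm_add_le_max _ _

lemma v_partial (g : ℤ_[p][X]) (k N : ℕ)
    (htail : ∀ m, N ≤ m → ‖(p : ℚ_[p]) ^ k * (vA p k (g ^ m) : ℤ_[p]) / m‖ ≤ ‖(p : ℚ_[p]) ^ (k + 1)‖)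
    :
    ‖∑ m ∈ Finset.range (p * N), ((p : ℚ_[p]) ^ (k + 1) * (vA p (k + 1) (g ^ (m + 1)) : ℤ_[p]) -
      (p : ℚ_[p]) ^ k * (vA p k (g ^ (m + 1)) : ℤ_[p])) / ((m + 1 : ℕ) : ℚ_[p])‖ ≤
      ‖(p : ℚ_[p]) ^ (k + 1)‖ := by
  have hp : p.Prime := Fact.out
  have hp0 : (p : ℚ_[p]) ≠ 0 := by exact_mod_cast hp.ne_zero
  set G : ℕ → ℚ_[p] := fun m => (vA p k (g ^ m) : ℤ_[p]) / ((p * m : ℕ) : ℚ_[p]) with hG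
  set F : ℕ → ℚ_[p] := fun m => ((vA p (k + 1) (g ^ m) : ℤ_[p]) : ℚ_[p]) / m -
      (if p ∣ m then ((vA p k (g ^ (m / p)) : ℤ_[p]) : ℚ_[p]) / m else 0) with hF
  have hre := v_sum_reindex p hp.pos G N
  have hre' : ∑ m ∈ Finset.range (p * N), (if p ∣ m + 1 then
      ((vA p k (g ^ ((m + 1) / p)) : ℤ_[p]) : ℚ_[p]) / ((m + 1 : ℕ) : ℚ_[p]) else 0) =
      ∑ m ∈ Finset.range N, G (m + 1) := by
    rw [← hre]
    refine Finset.sum_congr rfl fun m _ => ?_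
    split_ifs with h
    · rw [hG]; simp only [Nat.mul_div_cancel' h]
    · rfl
  have hNp : N ≤ p * N := Nat.le_mul_of_pos_left N hp.pos
  have key : ∑ m ∈ Finset.range (p * N),
      ((p : ℚ_[p]) ^ (k + 1) * (vA p (k + 1) (g ^ (m + 1)) : ℤ_[p]) -
      (p : ℚ_[p]) ^ k * (vA p k (g ^ (m + 1)) : ℤ_[p])) / ((m + 1 : ℕ) : ℚ_[p]) =
      (p : ℚ_[p]) ^ (k + 1) * ∑ m ∈ Finset.range (p * N), F (m + 1) -
      ∑ m ∈ Finset.Ico N (p * N),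
        (p : ℚ_[p]) ^ k * (vA p k (g ^ (m + 1)) : ℤ_[p]) / ((m + 1 : ℕ) : ℚ_[p]) := by
    have e1 : ∑ m ∈ Finset.range (p * N), F (m + 1) =
        ∑ m ∈ Finset.range (p * N),
          ((vA p (k + 1) (g ^ (m + 1)) : ℤ_[p]) : ℚ_[p]) / ((m + 1 : ℕ) : ℚ_[p]) -
        ∑ m ∈ Finset.range N, G (m + 1) := by
      rw [← hre', ← Finset.sum_sub_distrib]
    have e2 : (p : ℚ_[p]) ^ (k + 1) * ∑ m ∈ Finset.range N, G (m + 1) =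
        ∑ m ∈ Finset.range N,
          (p : ℚ_[p]) ^ k * (vA p k (g ^ (m + 1)) : ℤ_[p]) / ((m + 1 : ℕ) : ℚ_[p]) := by
      rw [Finset.mul_sum]
      refine Finset.sum_congr rfl fun m _ => ?_
      have hm : ((m + 1 : ℕ) : ℚ_[p]) ≠ 0 := by exact_mod_cast Nat.succ_ne_zero m
      simp only [hG]
      rw [Nat.cast_mul]
      field_simp
      ring
    rw [e1, mul_sub, e2, sub_sub, Finset.sum_range_add_sum_Ico _ hNp, Finset.mul_sum,
      ← Finset.sum_sub_distrib]
    refine Finset.sum_congr rfl fun m _ => ?_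
    rw [sub_div, mul_div_assoc]
  rw [key]
  refine (v_sub_le_max _ _).trans (max_le ?_ ?_)
  · rw [norm_mul]
    refine mul_le_of_le_one_right (norm_nonneg _) ?_
    exact IsUltrametricDist.norm_sum_le_of_forall_le_of_nonneg zero_le_one
      fun m _ => v_int p g k (m + 1) (Nat.succ_ne_zero m)
  · refine IsUltrametricDist.norm_sum_le_of_forall_le_of_nonneg (norm_nonneg _) fun m hm => ?_
    exact htail (m + 1) (by have := (Finset.mem_Ico.1 hm).1; omega)

lemma v_final [FiniteDimensional ℚ_[p] K] (hnorm : ∀ x : ℚ_[p], ‖algebraMap ℚ_[p] K x‖ = ‖x‖)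
    {ζ : K} {k : ℕ} (hζ : IsPrimitiveRoot ζ (p ^ (k + 1)))
    (hgen : Algebra.adjoin ℚ_[p] {ζ} = ⊤) (ε : K) (hε : ‖ε - 1‖ < 1) :
    ‖Algebra.trace ℚ_[p] K (∑' m : ℕ, (-1 : K) ^ m * (ε - 1) ^ (m + 1) / (m + 1))‖ ≤
      ‖(p : ℚ_[p]) ^ (k + 1)‖ := by
  have hp : p.Prime := Fact.out
  by_cases hsum : Summable fun m : ℕ => (-1 : K) ^ m * (ε - 1) ^ (m + 1) / (m + 1)
  swap
  · rw [tsum_eq_zero_of_not_summable hsum, map_zero, norm_zero]; exact norm_nonneg _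
  obtain ⟨g, hg1, hg2⟩ := v_rep hnorm hζ hgen (1 - ε) (by rwa [norm_sub_rev])
  let : NormedSpace ℚ_[p] K :=
    { norm_smul_le := fun a b => by rw [Algebra.smul_def, norm_mul, hnorm] }
  have hcont : Continuous (Algebra.trace ℚ_[p] K) := LinearMap.continuous_of_finiteDimensional _
  have hterm : ∀ m : ℕ, Algebra.trace ℚ_[p] K ((-1 : K) ^ m * (ε - 1) ^ (m + 1) / (m + 1)) =
      -(((p : ℚ_[p]) ^ (k + 1) * (vA p (k + 1) (g ^ (m + 1)) : ℤ_[p]) -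
      (p : ℚ_[p]) ^ k * (vA p k (g ^ (m + 1)) : ℤ_[p])) / ((m + 1 : ℕ) : ℚ_[p])) := by
    intro m
    have e1 : (-1 : K) ^ m * (ε - 1) ^ (m + 1) / (m + 1) =
        (-(((m + 1 : ℕ) : ℚ_[p])⁻¹)) • eval₂ (vphi p K) ζ (g ^ (m + 1)) := by
      rw [eval₂_pow, hg1, Algebra.smul_def, map_neg, map_inv₀, map_natCast,
        show (1 - ε) = (-1) * (ε - 1) by ring, mul_pow, pow_succ (-1 : K) m]
      push_cast
      ring
    rw [e1, map_smul, v_trace hnorm hζ hgen, smul_eq_mul]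
    ring
  have htend := (hsum.hasSum.tendsto_sum_nat)
  have htend2 := (hcont.tendsto _).comp htend
  have htend3 := htend2.comp (Filter.tendsto_id.const_mul_atTop' hp.pos)
  refine le_of_tendsto htend3.norm ?_
  have htail := v_tail hnorm hζ g hg2
  have hpos : 0 < ‖(p : ℚ_[p]) ^ (k + 1)‖ :=
    norm_pos_iff.2 (pow_ne_zero _ (by exact_mod_cast hp.ne_zero))
  have hev := (htail.norm).eventually_le_const (u := ‖(p : ℚ_[p]) ^ (k + 1)‖)
    (by rw [norm_zero]; exact hpos)
  obtain ⟨N0, hN0⟩ := Filter.eventually_atTop.1 hev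
  filter_upwards [Filter.eventually_ge_atTop N0] with N hN
  simp only [Function.comp_apply, map_sum, hterm, Finset.sum_neg_distrib, norm_neg, id]
  exact v_partial g k N fun m hm => hN0 m (hN.trans hm)

end

end

/-- let `p` be an odd prime, `n ≥ 1`, `K = ℚ_p(ζ_{p^n})`.  For a
principal unit `ε` of `K`, the trace `Tr_{K/ℚ_p}(log ε)` lies in `p^n·ℤ_p`
(so that `ζ_{p^n}^{Tr(-log ε)/p^n}` is well defined, as in the Artin–Hasse formula).
Here `log` is the `p`-adic logarithm `log ε = Σ_{m≥1} (-1)^{m+1} (ε-1)^m / m`. -/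
theorem vostokov_stmt11 (p : ℕ) [Fact p.Prime] (hp : p ≠ 2) (n : ℕ) (hn : 1 ≤ n)
    (K : Type*) [NormedField K] [CompleteSpace K] [Algebra ℚ_[p] K]
    [FiniteDimensional ℚ_[p] K]
    (hnorm : ∀ x : ℚ_[p], ‖algebraMap ℚ_[p] K x‖ = ‖x‖)
    (ζ : K) (hζ : IsPrimitiveRoot ζ (p ^ n))
    (hgen : Algebra.adjoin ℚ_[p] {ζ} = ⊤)
    (ε : K) (hε : ‖ε - 1‖ < 1) :
    ∃ c : ℤ_[p],
      Algebra.trace ℚ_[p] K (∑' m : ℕ, (-1 : K) ^ m * (ε - 1) ^ (m + 1) / (m + 1)) =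
        (p : ℚ_[p]) ^ n * (c : ℚ_[p]) := by
  obtain ⟨k, rfl⟩ : ∃ k, n = k + 1 := ⟨n - 1, by omega⟩
  have hp' : p.Prime := Fact.out
  have h := v_final hnorm hζ hgen ε hε
  have hp0 : (p : ℚ_[p]) ^ (k + 1) ≠ 0 := pow_ne_zero _ (by exact_mod_cast hp'.ne_zero)
  refine ⟨⟨Algebra.trace ℚ_[p] K (∑' m : ℕ, (-1 : K) ^ m * (ε - 1) ^ (m + 1) / (m + 1)) /
    (p : ℚ_[p]) ^ (k + 1), ?_⟩, ?_⟩
  · rw [norm_div]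
    exact div_le_one_of_le₀ h (norm_nonneg _)
  · exact (mul_div_cancel₀ _ hp0).symm
end

section
/- Let p be an odd prime, n ≥ 1, K = ℚ_p(ζ_{p^n}), and π = ζ_{p^n} - 1. For a principal unit ε of K, Tr_{K/ℚ_p}(π^{-1}·ζ_{p^n}·log ε) lies in ℤ_p (so the second Artin–Hasse formula (ε,π)_{p^n} = ζ_{p^n}^{Tr(π^{-1}ζ_{p^n} log ε)/p^n} defines an element of μ_{p^n}). -/
open Polynomial in
theorem aux_irr (p : ℕ) [Fact p.Prime] (k : ℕ) :
    Irreducible (cyclotomic (p ^ (k + 1)) ℚ_[p]) := by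
  have hp : p.Prime := Fact.out
  have hE := cyclotomic_prime_pow_comp_X_add_one_isEisensteinAt p k
  set f : ℤ[X] := (cyclotomic (p ^ (k + 1)) ℤ).comp (X + 1) with hf
  have hmon : f.Monic := by
    rw [hf, show (X + 1 : ℤ[X]) = X + C 1 by simp]
    refine (cyclotomic.monic _ ℤ).comp (monic_X_add_C 1) fun h => ?_
    rw [natDegree_X_add_C] at h
    exact one_ne_zero h
  have hdeg : 0 < f.natDegree := by
    rw [hf, natDegree_comp, natDegree_cyclotomic, show (X + 1 : ℤ[X]) = X + C 1 by simp,
      natDegree_X_add_C, mul_one]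
    exact Nat.totient_pos.2 (pow_pos hp.pos _)
  set g : ℤ_[p][X] := f.map (Int.castRingHom ℤ_[p]) with hg
  have hgm : g.Monic := hmon.map _
  have hgd : g.natDegree = f.natDegree := hmon.natDegree_map _
  have hprime : (Ideal.span {(p : ℤ_[p])}).IsPrime := by
    rw [Ideal.span_singleton_prime (by exact_mod_cast hp.ne_zero)]
    exact PadicInt.prime_p
  have hge : g.IsEisensteinAt (Ideal.span {(p : ℤ_[p])}) := by
    refine Monic.isEisensteinAt_of_mem_of_notMem hgm hprime.ne_top ?_ ?_
    · intro i hi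
      rw [hgd] at hi
      have := hE.mem hi
      rw [Ideal.submodule_span_eq, Ideal.mem_span_singleton] at this
      rw [Ideal.mem_span_singleton, hg, coeff_map]
      obtain ⟨c, hc⟩ := this
      exact ⟨(c : ℤ_[p]), by rw [hc]; simp⟩
    · have := hE.notMem
      intro h
      apply this
      rw [Ideal.submodule_span_eq, Ideal.span_singleton_pow, Ideal.mem_span_singleton]
      rw [Ideal.span_singleton_pow, Ideal.mem_span_singleton, hg, coeff_map] at h
      have h2 := (PadicInt.norm_int_le_pow_iff_dvd (p := p) (k := f.coeff 0) (n := 2)).1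
        ((PadicInt.norm_le_pow_iff_mem_span_pow _ 2).2 (by
          rw [Ideal.mem_span_singleton]; simpa using h))
      exact_mod_cast h2
  have hgi : Irreducible g := hge.irreducible hprime hgm.isPrimitive (by rw [hgd]; exact hdeg)
  have h1 := (hgm.irreducible_iff_irreducible_map_fraction_map (K := ℚ_[p])).1 hgi
  have h2 : g.map (algebraMap ℤ_[p] ℚ_[p]) =
      (cyclotomic (p ^ (k + 1)) ℚ_[p]).comp (X + C 1) := by
    rw [hg, hf, Polynomial.map_map, Polynomial.map_comp, map_cyclotomic]
    simp
  rw [h2] at h1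
  rw [← MulEquiv.irreducible_iff (algEquivAevalXAddC (1 : ℚ_[p]))]
  simpa [algEquivAevalXAddC, comp, aeval_def] using h1

theorem aux_sum (C : Type*) [Field C] (m i : ℕ) (ζ : C)
    (hζ : IsPrimitiveRoot ζ m) (hm : 0 < m) :
    ∃ c : ℕ, ∑ μ ∈ Polynomial.nthRootsFinset m (1 : C), μ ^ i = m * c := by
  by_cases h : ∀ μ ∈ Polynomial.nthRootsFinset m (1 : C), μ ^ i = 1
  · refine ⟨1, ?_⟩
    rw [Finset.sum_congr rfl h]
    simp [hζ.card_nthRootsFinset]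
  · push Not at h
    obtain ⟨ν, hν, hne⟩ := h
    rw [Polynomial.mem_nthRootsFinset hm] at hν
    have hν0 : ν ≠ 0 := by rintro rfl; simp [hm.ne'] at hν
    refine ⟨0, ?_⟩
    have h1 : ∑ μ ∈ Polynomial.nthRootsFinset m (1 : C), μ ^ i =
        ∑ μ ∈ Polynomial.nthRootsFinset m (1 : C), (ν * μ) ^ i := by
      symm
      refine Finset.sum_bij (fun μ _ => ν * μ) ?_ ?_ ?_ ?_
      · intro μ hμ
        rw [Polynomial.mem_nthRootsFinset hm] at hμ ⊢
        rw [mul_pow, hμ, hν, one_mul]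
      · intro a _ b _ hab
        exact mul_left_cancel₀ hν0 hab
      · intro b hb
        rw [Polynomial.mem_nthRootsFinset hm] at hb
        refine ⟨ν⁻¹ * b, ?_, ?_⟩
        · rw [Polynomial.mem_nthRootsFinset hm, mul_pow, inv_pow, hν, hb]; simp
        · field_simp
      · intros; rfl
    simp_rw [mul_pow] at h1
    rw [← Finset.mul_sum] at h1
    have h2 : (ν ^ i - 1) * ∑ μ ∈ Polynomial.nthRootsFinset m (1 : C), μ ^ i = 0 := by
      linear_combination -h1
    rcases mul_eq_zero.1 h2 with h | h
    · exact absurd (sub_eq_zero.1 h) hne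
    · simpa using h

theorem aux_primsum (C : Type*) [Field C] (p : ℕ) (hp : p.Prime) (k i : ℕ) (ζ : C)
    (hζ : IsPrimitiveRoot ζ (p ^ (k + 1))) :
    ∃ c : ℤ, ∑ μ ∈ primitiveRoots (p ^ (k + 1)) C, μ ^ i = (p : C) ^ k * c := by
  obtain ⟨c, hc⟩ := aux_sum C _ i ζ hζ (pow_pos hp.pos _)
  obtain ⟨d, hd⟩ := aux_sum C (p ^ k) i (ζ ^ p)
    (hζ.pow (pow_pos hp.pos _) (by ring)) (pow_pos hp.pos _)
  classical
  have hU : Polynomial.nthRootsFinset (p ^ (k + 1)) (1 : C) =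
      primitiveRoots (p ^ (k + 1)) C ∪ Polynomial.nthRootsFinset (p ^ k) (1 : C) := by
    ext μ
    rw [Finset.mem_union, Polynomial.mem_nthRootsFinset (pow_pos hp.pos _),
      Polynomial.mem_nthRootsFinset (pow_pos hp.pos _), mem_primitiveRoots (pow_pos hp.pos _)]
    constructor
    · intro h
      by_cases h' : μ ^ p ^ k = 1
      · exact Or.inr h'
      · left
        have := Fact.mk hp
        rw [← orderOf_eq_prime_pow h' h]
        exact IsPrimitiveRoot.orderOf μ
    · rintro (h | h)
      · exact h.pow_eq_one
      · rw [pow_succ, pow_mul, h, one_pow]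
  have hD : Disjoint (primitiveRoots (p ^ (k + 1)) C)
      (Polynomial.nthRootsFinset (p ^ k) (1 : C)) := by
    rw [Finset.disjoint_left]
    intro μ h1 h2
    rw [Polynomial.mem_nthRootsFinset (pow_pos hp.pos _)] at h2
    rw [mem_primitiveRoots (pow_pos hp.pos _)] at h1
    have := Nat.le_of_dvd (pow_pos hp.pos _) (h1.dvd_of_pow_eq_one _ h2)
    exact absurd this (not_le.2 (Nat.pow_lt_pow_right hp.one_lt (Nat.lt_succ_self k)))
  rw [hU, Finset.sum_union hD, hd] at hc
  refine ⟨p * c - d, ?_⟩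
  push_cast at hc ⊢
  rw [eq_sub_of_add_eq hc]; ring

theorem aux_trace (p : ℕ) [Fact p.Prime] (k : ℕ) (K : Type*) [Field K] [Algebra ℚ_[p] K]
    [FiniteDimensional ℚ_[p] K] (ζ : K) (hζ : IsPrimitiveRoot ζ (p ^ (k + 1)))
    (hgen : Algebra.adjoin ℚ_[p] {ζ} = ⊤) (i : ℕ) :
    ∃ c : ℤ, Algebra.trace ℚ_[p] K (ζ ^ i) = (p : ℚ_[p]) ^ k * c := by
  have hp : p.Prime := Fact.out
  have : NeZero (p ^ (k + 1)) := ⟨(pow_pos hp.pos _).ne'⟩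
  have hcyc : IsCyclotomicExtension {p ^ (k + 1)} ℚ_[p] K := by
    rw [IsCyclotomicExtension.iff_adjoin_eq_top]
    refine ⟨?_, ?_⟩
    · rintro n rfl _; exact ⟨ζ, hζ⟩
    · rw [eq_top_iff, ← hgen]
      apply Algebra.adjoin_mono
      rintro _ rfl
      exact ⟨_, rfl, NeZero.ne _, hζ.pow_eq_one⟩
  have hirr := aux_irr p k
  let E := AlgebraicClosure K
  have h1 := trace_eq_sum_embeddings (K := ℚ_[p]) E (x := ζ ^ i)
  have h2 : ∑ σ : K →ₐ[ℚ_[p]] E, σ (ζ ^ i) = ∑ μ ∈ primitiveRoots (p ^ (k + 1)) E, μ ^ i := by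
    rw [← Finset.sum_coe_sort (primitiveRoots (p ^ (k + 1)) E) (fun μ => μ ^ i)]
    refine Fintype.sum_equiv (hζ.embeddingsEquivPrimitiveRoots E hirr) _ _ fun σ => ?_
    simp
  obtain ⟨c, hc⟩ := aux_primsum E p hp k i (algebraMap K E ζ)
    (hζ.map_of_injective (algebraMap K E).injective)
  refine ⟨c, (algebraMap ℚ_[p] E).injective ?_⟩
  rw [h1, h2, hc]
  simp

theorem aux_pi_norm (p : ℕ) [Fact p.Prime] (k : ℕ) (K : Type*) [NormedField K]
    [Algebra ℚ_[p] K] [IsUltrametricDist K]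
    (hnorm : ∀ x : ℚ_[p], ‖algebraMap ℚ_[p] K x‖ = ‖x‖)
    (ζ : K) (hζ : IsPrimitiveRoot ζ (p ^ (k + 1))) :
    ‖ζ - 1‖ ^ (p ^ k * (p - 1)) = (p : ℝ)⁻¹ := by
  have hp : p.Prime := Fact.out
  have hpos : 0 < p ^ (k + 1) := pow_pos hp.pos _
  have key : ∀ a b : K, IsPrimitiveRoot a (p ^ (k + 1)) → IsPrimitiveRoot b (p ^ (k + 1)) →
      ‖1 - b‖ ≤ ‖1 - a‖ := by
    intro a b ha hb
    have : NeZero (p ^ (k + 1)) := ⟨hpos.ne'⟩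
    obtain ⟨i, -, rfl⟩ := ha.eq_pow_of_pow_eq_one hb.pow_eq_one
    have ha1 : ‖a‖ = 1 := by
      have h := congrArg norm ha.pow_eq_one
      rw [norm_pow, norm_one] at h
      exact (pow_eq_one_iff_of_nonneg (norm_nonneg _) hpos.ne').1 h
    rw [← mul_neg_geom_sum, norm_mul]
    refine mul_le_of_le_one_right (norm_nonneg _) ?_
    refine IsUltrametricDist.norm_sum_le_of_forall_le_of_nonneg zero_le_one fun j _ => ?_
    rw [norm_pow, ha1, one_pow]
  have h1 := Polynomial.eval_one_cyclotomic_prime_pow (R := K) (p := p) k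
  rw [Polynomial.cyclotomic_eq_prod_X_sub_primitiveRoots hζ, Polynomial.eval_prod] at h1
  have h2 := congrArg norm h1
  rw [norm_prod, Finset.prod_congr rfl (g := fun _ => ‖ζ - 1‖)] at h2
  · rw [Finset.prod_const, hζ.card_primitiveRoots, Nat.totient_prime_pow_succ hp] at h2
    rw [h2, ← map_natCast (algebraMap ℚ_[p] K) p, hnorm, Padic.norm_p]
  · intro μ hμ
    rw [mem_primitiveRoots hpos] at hμ
    rw [Polynomial.eval_sub, Polynomial.eval_X, Polynomial.eval_C, norm_sub_rev ζ 1]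
    exact le_antisymm (key _ _ hζ hμ) (key _ _ hμ hζ)

open Polynomial in
theorem aux_decomp (p : ℕ) [Fact p.Prime] (k : ℕ) (K : Type*) [Field K]
    [Algebra ℚ_[p] K] (ζ : K) (hζ : IsPrimitiveRoot ζ (p ^ (k + 1)))
    (hgen : Algebra.adjoin ℚ_[p] {ζ} = ⊤) (x : K) :
    ∃ a : ℕ → ℚ_[p], x = ∑ i ∈ Finset.range (p ^ k * (p - 1)),
      algebraMap ℚ_[p] K (a i) * (ζ - 1) ^ i := by
  have hp : p.Prime := Fact.out
  have hx : x ∈ Algebra.adjoin ℚ_[p] {ζ} := hgen ▸ Algebra.mem_top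
  rw [Algebra.adjoin_singleton_eq_range_aeval] at hx
  obtain ⟨f, hf⟩ := hx
  have hf : aeval ζ f = x := hf
  set Φ := cyclotomic (p ^ (k + 1)) ℚ_[p] with hΦ
  have hm : Φ.Monic := cyclotomic.monic _ _
  have hΦ0 : aeval ζ Φ = 0 := by
    rw [hΦ, aeval_def, ← eval_map, map_cyclotomic]
    exact hζ.isRoot_cyclotomic (pow_pos hp.pos _)
  have hd : Φ.natDegree = p ^ k * (p - 1) := by
    rw [hΦ, natDegree_cyclotomic, Nat.totient_prime_pow_succ hp]
  have hepos : 0 < p ^ k * (p - 1) := Nat.mul_pos (pow_pos hp.pos _) (Nat.sub_pos_of_lt hp.one_lt)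
  set g := (f %ₘ Φ).comp (X + C 1) with hg
  have hgd : g.natDegree < p ^ k * (p - 1) := by
    rw [hg, natDegree_comp, natDegree_X_add_C, mul_one, ← hd]
    refine natDegree_modByMonic_lt f hm ?_
    intro h
    rw [h, natDegree_one] at hd
    omega
  have hgx : aeval (ζ - 1) g = x := by
    rw [hg, aeval_comp]
    simp only [map_add, aeval_X, map_one, sub_add_cancel]
    rw [← hf]
    conv_rhs => rw [← modByMonic_add_div f Φ]
    simp [hΦ0]
  refine ⟨g.coeff, ?_⟩
  rw [← hgx, aeval_eq_sum_range' hgd]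
  simp [Algebra.smul_def]

/-- norms of monomials -/
theorem aux_mono (p : ℕ) [Fact p.Prime] (e : ℕ) (K : Type*) [NormedField K]
    [Algebra ℚ_[p] K] 
    (hnorm : ∀ x : ℚ_[p], ‖algebraMap ℚ_[p] K x‖ = ‖x‖) (π : K)
    (hπ : ‖π‖ ^ e = (p : ℝ)⁻¹) (a : ℚ_[p]) (ha : a ≠ 0) (i : ℕ) :
    ‖algebraMap ℚ_[p] K a * π ^ i‖ ^ e = (p : ℝ) ^ (-(e * a.valuation + i)) := by
  have hp : p.Prime := Fact.out
  have hp0 : (p : ℝ) ≠ 0 := by exact_mod_cast hp.ne_zero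
  rw [norm_mul, hnorm, norm_pow, mul_pow, ← pow_mul, mul_comm i e, pow_mul, hπ,
    Padic.norm_eq_zpow_neg_valuation ha, inv_pow, ← zpow_natCast, ← zpow_natCast, ← zpow_mul,
    ← zpow_neg, ← zpow_add₀ hp0]
  congr 1
  ring

theorem aux_max (p : ℕ) [Fact p.Prime] (e : ℕ) (he : 0 < e) (K : Type*) [NormedField K]
    [Algebra ℚ_[p] K] [IsUltrametricDist K]
    (hnorm : ∀ x : ℚ_[p], ‖algebraMap ℚ_[p] K x‖ = ‖x‖) (π : K)
    (hπ : ‖π‖ ^ e = (p : ℝ)⁻¹) (a : ℕ → ℚ_[p]) (x : K)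
    (hx : x = ∑ i ∈ Finset.range e, algebraMap ℚ_[p] K (a i) * π ^ i) (hx0 : x ≠ 0) :
    (∀ i < e, ‖algebraMap ℚ_[p] K (a i) * π ^ i‖ ≤ ‖x‖) ∧
    ∃ i < e, a i ≠ 0 ∧ ‖x‖ = ‖algebraMap ℚ_[p] K (a i) * π ^ i‖ := by
  have hp : p.Prime := Fact.out
  have hp1 : (1 : ℝ) < p := by exact_mod_cast hp.one_lt
  classical
  set s := (Finset.range e).filter (fun i => a i ≠ 0) with hs
  have hxs : x = ∑ i ∈ s, algebraMap ℚ_[p] K (a i) * π ^ i := by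
    rw [hx, hs, Finset.sum_filter_of_ne]
    intro i _ h h0
    simp [h0] at h
  have hne : s.Nonempty := by
    rw [Finset.nonempty_iff_ne_empty]
    intro h
    rw [h, Finset.sum_empty] at hxs
    exact hx0 hxs
  have hpw : Set.Pairwise (s : Set ℕ) (fun i j =>
      ‖algebraMap ℚ_[p] K (a i) * π ^ i‖ ≠ ‖algebraMap ℚ_[p] K (a j) * π ^ j‖) := by
    intro i hi j hj hij h
    simp only [hs, Finset.coe_filter, Finset.mem_range, Set.mem_ofPred_eq] at hi hj
    have h := congrArg (fun t : ℝ => t ^ e) h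
    beta_reduce at h
    rw [aux_mono p e K hnorm π hπ _ hi.2, aux_mono p e K hnorm π hπ _ hj.2] at h
    have h := zpow_right_injective₀ (by linarith) hp1.ne' h
    have h : (e : ℤ) * (a i).valuation + i = e * (a j).valuation + j := by
      have h := neg_injective h
      exact h
    have h3 := congrArg (· % (e : ℤ)) h
    simp only [Int.mul_add_emod_self_left] at h3
    rw [Int.emod_eq_of_lt (by omega) (by omega), Int.emod_eq_of_lt (by omega) (by omega)] at h3
    omega
  have hsup := IsUltrametricDist.norm_sum_eq_sup'_of_pairwise_ne hne hpw
  rw [← hxs] at hsup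
  constructor
  · intro i hi
    by_cases h0 : a i = 0
    · simp [h0]
    · rw [hsup]
      exact Finset.le_sup' (fun i => ‖algebraMap ℚ_[p] K (a i) * π ^ i‖)
        (by simp [hs, hi, h0])
  · obtain ⟨i, hi, h⟩ := Finset.exists_mem_eq_sup' hne
      (fun i => ‖algebraMap ℚ_[p] K (a i) * π ^ i‖)
    simp only [hs, Finset.mem_filter, Finset.mem_range] at hi
    exact ⟨i, hi.1, hi.2, hsup.trans h⟩

theorem aux_arith (p k N v : ℕ) (hp : 2 ≤ p) (hN : p ^ v ≤ N) (hv : k < v) :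
    p ^ k * (p - 1) * (v - k) ≤ N - 1 := by
  obtain ⟨j, rfl⟩ := Nat.exists_eq_add_of_lt hv
  have h1 : 1 + (j + 1) * (p - 1) ≤ p ^ (j + 1) := by
    have h := one_add_mul_le_pow (R := ℤ) (a := (p : ℤ) - 1) (by omega) (j + 1)
    zify [show 1 ≤ p by omega]
    have h' : (1 + ((p : ℤ) - 1)) = p := by ring
    rw [h'] at h
    exact_mod_cast h
  have h2 : k + j + 1 - k = j + 1 := by omega
  rw [h2]
  have h3 : p ^ k * (1 + (j + 1) * (p - 1)) ≤ p ^ (k + j + 1) := by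
    rw [add_assoc, pow_add]; exact Nat.mul_le_mul_left _ h1
  have h4 : 1 ≤ p ^ k := Nat.one_le_pow _ _ (by omega)
  have h5 : p ^ k * (1 + (j + 1) * (p - 1)) = p ^ k + p ^ k * (p - 1) * (j + 1) := by ring
  omega

theorem vostokov_stmt12 (p : ℕ) [Fact p.Prime] (hp : p ≠ 2) (n : ℕ) (hn : 1 ≤ n)
    (K : Type*) [NormedField K] [CompleteSpace K] [Algebra ℚ_[p] K]
    [FiniteDimensional ℚ_[p] K]
    (hnorm : ∀ x : ℚ_[p], ‖algebraMap ℚ_[p] K x‖ = ‖x‖)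
    (ζ : K) (hζ : IsPrimitiveRoot ζ (p ^ n))
    (hgen : Algebra.adjoin ℚ_[p] {ζ} = ⊤)
    (ε : K) (hε : ‖ε - 1‖ < 1) :
    ∃ c : ℤ_[p],
      Algebra.trace ℚ_[p] K
          ((ζ - 1)⁻¹ * ζ * ∑' m : ℕ, (-1 : K) ^ m * (ε - 1) ^ (m + 1) / (m + 1)) =
        (c : ℚ_[p]) := by
  obtain ⟨k, rfl⟩ : ∃ k, n = k + 1 := ⟨n - 1, by omega⟩
  have hpp : p.Prime := Fact.out
  have hp1 : (1 : ℝ) < p := by exact_mod_cast hpp.one_lt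
  have hp0 : (0 : ℝ) < p := by linarith
  have hnat : ∀ m : ℕ, ‖(m : K)‖ = ‖(m : ℚ_[p])‖ := fun m => by
    rw [← hnorm, map_natCast]
  have : IsUltrametricDist K :=
    IsUltrametricDist.isUltrametricDist_of_forall_norm_natCast_le_one fun m => by
      rw [hnat]; exact IsUltrametricDist.norm_natCast_le_one ℚ_[p] m
  set π := ζ - 1 with hπdef
  set e := p ^ k * (p - 1) with hedef
  have he : 0 < e := Nat.mul_pos (pow_pos hpp.pos _) (Nat.sub_pos_of_lt hpp.one_lt)
  have hπ : ‖π‖ ^ e = (p : ℝ)⁻¹ := aux_pi_norm p k K hnorm ζ hζ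
  have hπpos : 0 < ‖π‖ := by
    rcases (norm_nonneg π).eq_or_lt with h | h
    · rw [← h, zero_pow he.ne'] at hπ
      exact absurd hπ.symm (inv_ne_zero hp0.ne')
    · exact h
  have hπ1 : ‖π‖ ≤ 1 := by
    refine (pow_le_one_iff_of_nonneg hπpos.le he.ne').1 ?_
    rw [hπ]; exact inv_le_one_of_one_le₀ hp1.le
  -- maximal ideal is generated by `π`
  have hA : ∀ u : K, ‖u‖ < 1 → ‖u‖ ≤ ‖π‖ := by
    intro u hu
    by_cases hu0 : u = 0
    · simp [hu0]
    obtain ⟨a, ha⟩ := aux_decomp p k K ζ hζ hgen u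
    obtain ⟨-, i, hi, hai, h⟩ := aux_max p e he K hnorm π hπ a u ha hu0
    have h1 := aux_mono p e K hnorm π hπ _ hai i
    rw [← h] at h1
    have h2 : ‖u‖ ^ e < 1 := pow_lt_one₀ (norm_nonneg _) hu he.ne'
    rw [h1, ← zpow_zero (p : ℝ), zpow_lt_zpow_iff_right₀ hp1] at h2
    refine le_of_pow_le_pow_left₀ he.ne' hπpos.le ?_
    rw [h1, hπ, ← zpow_neg_one]
    exact zpow_le_zpow_right₀ hp1.le (by omega)
  -- traces of integers
  have hT0 : ∀ i j : ℕ, ‖Algebra.trace ℚ_[p] K (ζ ^ j * π ^ i)‖ ≤ ((p : ℝ)⁻¹) ^ k := by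
    intro i
    induction i with
    | zero =>
      intro j
      obtain ⟨c, hc⟩ := aux_trace p k K ζ hζ hgen j
      rw [pow_zero, mul_one, hc, norm_mul, norm_pow, Padic.norm_p]
      exact mul_le_of_le_one_right (by positivity) (Padic.norm_int_le_one c)
    | succ i ih =>
      intro j
      have : ζ ^ j * π ^ (i + 1) = ζ ^ (j + 1) * π ^ i - ζ ^ j * π ^ i := by
        rw [hπdef]; ring
      rw [this, map_sub, sub_eq_add_neg]
      refine (IsUltrametricDist.norm_add_le_max _ _).trans (max_le (ih _) ?_)
      rw [norm_neg]
      exact ih _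
  have hT : ∀ x : K, ‖x‖ ≤ 1 → ‖Algebra.trace ℚ_[p] K x‖ ≤ ((p : ℝ)⁻¹) ^ k := by
    intro x hx
    by_cases hx0 : x = 0
    · rw [hx0, map_zero, norm_zero]; positivity
    obtain ⟨a, ha⟩ := aux_decomp p k K ζ hζ hgen x
    obtain ⟨h, -⟩ := aux_max p e he K hnorm π hπ a x ha hx0
    rw [ha, map_sum]
    refine IsUltrametricDist.norm_sum_le_of_forall_le_of_nonneg (by positivity) fun i hi => ?_
    rw [Finset.mem_range] at hi
    rw [← Algebra.smul_def, map_smul, smul_eq_mul, norm_mul]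
    have h1 : ‖a i‖ ≤ 1 := by
      by_cases hai : a i = 0
      · simp [hai]
      have h2 := (h i hi).trans hx
      have h3 := pow_le_one₀ (norm_nonneg _) h2 (n := e)
      rw [aux_mono p e K hnorm π hπ _ hai, ← zpow_zero (p : ℝ),
        zpow_le_zpow_iff_right₀ hp1] at h3
      rw [Padic.norm_eq_zpow_neg_valuation hai, ← zpow_zero (p : ℝ),
        zpow_le_zpow_iff_right₀ hp1]
      by_contra hcon
      have : (a i).valuation ≤ -1 := by omega
      have : (e : ℤ) * (a i).valuation ≤ e * (-1) :=
        mul_le_mul_of_nonneg_left this (by omega)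
      omega
    have h2 := hT0 i 0
    rw [pow_zero, one_mul] at h2
    exact (mul_le_of_le_one_left (norm_nonneg _) h1).trans h2
  -- the logarithm
  have hterm : ∀ m : ℕ, ‖(-1 : K) ^ m * (ε - 1) ^ (m + 1) / (m + 1)‖ ≤ (p : ℝ) ^ k * ‖π‖ := by
    intro m
    have hu := hA _ hε
    have hN : ‖((m : K) + 1)‖ = (p : ℝ) ^ (-(padicValNat p (m + 1) : ℤ)) := by
      have := hnat (m + 1)
      push_cast at this
      rw [this]
      have h2 : ((m : ℚ_[p]) + 1) = ((m + 1 : ℕ) : ℚ_[p]) := by push_cast; rfl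
      rw [h2, Padic.norm_eq_zpow_neg_valuation (by exact_mod_cast Nat.succ_ne_zero m),
        Padic.valuation_natCast]
    rw [norm_div, norm_mul, norm_pow, norm_neg, norm_one, one_pow, one_mul, norm_pow, hN,
      zpow_neg, div_inv_eq_mul, zpow_natCast, pow_succ, mul_right_comm]
    set v := padicValNat p (m + 1) with hv
    refine mul_le_mul ?_ hu (norm_nonneg _) (by positivity)
    refine (mul_le_mul_of_nonneg_right (pow_le_pow_left₀ (norm_nonneg _) hu m)
      (by positivity)).trans ?_
    rcases le_or_gt v k with hvk | hvk
    · exact (mul_le_of_le_one_left (by positivity) (pow_le_one₀ hπpos.le hπ1)).trans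
        (pow_le_pow_right₀ hp1.le hvk)
    · have h1 := aux_arith p k (m + 1) v hpp.two_le
        (Nat.le_of_dvd (Nat.succ_pos m) pow_padicValNat_dvd) hvk
      rw [Nat.add_sub_cancel, ← hedef] at h1
      have h2 : ‖π‖ ^ m ≤ ((p : ℝ)⁻¹) ^ (v - k) := by
        rw [← hπ, ← pow_mul]
        exact pow_le_pow_of_le_one hπpos.le hπ1 h1
      refine (mul_le_mul_of_nonneg_right h2 (by positivity)).trans ?_
      obtain ⟨j, hj⟩ := Nat.exists_eq_add_of_lt hvk
      have h3 : v - k = j + 1 := by omega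
      rw [h3, hj, add_assoc, pow_add, inv_pow]
      have : (p : ℝ) ^ (j + 1) ≠ 0 := by positivity
      apply le_of_eq
      field_simp
      ring
  have hlog := IsUltrametricDist.norm_tsum_le_of_forall_le_of_nonneg
    (by positivity : (0 : ℝ) ≤ (p : ℝ) ^ k * ‖π‖) hterm
  set L := ∑' m : ℕ, (-1 : K) ^ m * (ε - 1) ^ (m + 1) / (m + 1) with hL
  have hζ1 : ‖ζ‖ = 1 := by
    have h := congrArg norm hζ.pow_eq_one
    rw [norm_pow, norm_one] at h
    exact (pow_eq_one_iff_of_nonneg (norm_nonneg _) (pow_pos hpp.pos _).ne').1 h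
  have hy : ‖((p : ℚ_[p]) ^ k) • (π⁻¹ * ζ * L)‖ ≤ 1 := by
    rw [Algebra.smul_def, norm_mul, hnorm, norm_pow, Padic.norm_p, norm_mul, norm_mul,
      norm_inv, hζ1, mul_one]
    calc ((p : ℝ)⁻¹) ^ k * (‖π‖⁻¹ * ‖L‖)
        ≤ ((p : ℝ)⁻¹) ^ k * (‖π‖⁻¹ * ((p : ℝ) ^ k * ‖π‖)) := by gcongr
      _ = 1 := by
        rw [inv_pow]
        have : (p : ℝ) ^ k ≠ 0 := by positivity
        field_simp
  have hfin := hT _ hy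
  rw [map_smul, smul_eq_mul, norm_mul, norm_pow, Padic.norm_p] at hfin
  have hfin2 : ‖Algebra.trace ℚ_[p] K (π⁻¹ * ζ * L)‖ ≤ 1 := by
    have : 0 < ((p : ℝ)⁻¹) ^ k := by positivity
    exact (mul_le_iff_le_one_right this).1 hfin
  exact ⟨⟨_, hfin2⟩, rfl⟩
end
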